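/- Let θ₁ = 2cos(2π/15), and θ_{m+1} = θ_m² − 2 for m = 1, 2, 3 (so θ₂ = 2cos(4π/15), θ₃ = 2cos(8π/15), θ₄ = 2cos(16π/15)). For ℓ ∈ {0, 1, 2, 3} and Gaussian integers a_ℓ, b_ℓ, c_ℓ, d_ℓ ∈ ℤ[i], set σ^m(x_ℓ) = a_ℓ + b_ℓθ_{m+1} + c_ℓθ_{m+1}² + d_ℓθ_{m+1}³ for m = 0, 1, 2, 3 (with x_ℓ = σ⁰(x_ℓ)). If not all coefficients are zero, then the determinant of the 4×4 complex matrix [[x₀, x₁, x₂, x₃], [i·σ(x₃), σ(x₀), σ(x₁), σ(x₂)], [i·σ²(x₂), i·σ²(x₃), σ²(x₀), σ²(x₁)], [i·σ³(x₁), i·σ³(x₂), i·σ³(x₃), σ³(x₀)]] is a nonzero Gaussian integer; in particular its squared modulus is at least 1. (This is the full-diversity / non-vanishing determinant property of the 4×4 perfect space-time code built on the cyclic division algebra (ℚ(i, θ₁)/ℚ(i), σ, i).) -/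

import Mathlib

noncomputable section

open Complex GaussianInt

/-- `θ₁ = 2cos(2π/15)`. -/
def s1 : ℂ := 2 * Real.cos (2 * Real.pi / 15)

/-- `θ₂ = θ₁² − 2 = 2cos(4π/15)`. -/
def s2 : ℂ := s1 ^ 2 - 2

/-- `θ₃ = θ₂² − 2 = 2cos(8π/15)`. -/
def s3 : ℂ := s2 ^ 2 - 2

/-- `θ₄ = θ₃² − 2 = 2cos(16π/15)`. -/
def s4 : ℂ := s3 ^ 2 - 2

/-- `σ^m(x_ℓ) = a_ℓ + b_ℓ·θ_{m+1} + c_ℓ·θ_{m+1}² + d_ℓ·θ_{m+1}³`, as a function of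
the evaluation point `t = θ_{m+1}`. -/
def Y (a b c d : Fin 4 → GaussianInt) (ℓ : Fin 4) (t : ℂ) : ℂ :=
  toComplex (a ℓ) + toComplex (b ℓ) * t + toComplex (c ℓ) * t ^ 2
    + toComplex (d ℓ) * t ^ 3

/-- The codeword matrix of the `4×4` perfect space-time code built on the cyclic
division algebra `(ℚ(i,θ₁)/ℚ(i), σ, i)` determined by the coefficients `a b c d`. -/
def M4 (a b c d : Fin 4 → GaussianInt) : Matrix (Fin 4) (Fin 4) ℂ :=
  !![Y a b c d 0 s1, Y a b c d 1 s1, Y a b c d 2 s1, Y a b c d 3 s1;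
     Complex.I * Y a b c d 3 s2, Y a b c d 0 s2, Y a b c d 1 s2, Y a b c d 2 s2;
     Complex.I * Y a b c d 2 s3, Complex.I * Y a b c d 3 s3, Y a b c d 0 s3,
       Y a b c d 1 s3;
     Complex.I * Y a b c d 1 s4, Complex.I * Y a b c d 2 s4,
       Complex.I * Y a b c d 3 s4, Y a b c d 0 s4]

open Polynomial in
/-- Twisted circulant matrix with rows built from `p q r s`. -/
def G {R : Type*} [CommRing R] (j : R) (p q r s : Fin 4 → R) : Matrix (Fin 4) (Fin 4) R :=
  !![p 0, p 1, p 2, p 3;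
     j * q 3, q 0, q 1, q 2;
     j * r 2, j * r 3, r 0, r 1;
     j * s 1, j * s 2, j * s 3, s 0]

theorem G_det {R : Type*} [CommRing R] (j : R) (p q r s : Fin 4 → R) :
    (G j p q r s).det =
      p 0 * (q 0 * (r 0 * s 0 - r 1 * (j * s 3)) - q 1 * (j * r 3 * s 0 - r 1 * (j * s 2))
        + q 2 * (j * r 3 * (j * s 3) - r 0 * (j * s 2)))
      - p 1 * (j * q 3 * (r 0 * s 0 - r 1 * (j * s 3)) - q 1 * (j * r 2 * s 0 - r 1 * (j * s 1))
        + q 2 * (j * r 2 * (j * s 3) - r 0 * (j * s 1)))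
      + p 2 * (j * q 3 * (j * r 3 * s 0 - r 1 * (j * s 2)) - q 0 * (j * r 2 * s 0 - r 1 * (j * s 1))
        + q 2 * (j * r 2 * (j * s 2) - j * r 3 * (j * s 1)))
      - p 3 * (j * q 3 * (j * r 3 * (j * s 3) - r 0 * (j * s 2))
        - q 0 * (j * r 2 * (j * s 3) - r 0 * (j * s 1))
        + q 1 * (j * r 2 * (j * s 2) - j * r 3 * (j * s 1))) := by
  simp [G, Matrix.det_succ_row_zero, Fin.sum_univ_succ, Fin.succAbove]
  ring

theorem G_cyc {R : Type*} [CommRing R] (j : R) (p q r s : Fin 4 → R) :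
    (G j q r s p).det = (G j p q r s).det := by
  rw [G_det, G_det]; ring

theorem G_scale {R : Type*} [CommRing R] (j u v w z : R) (p q r s : Fin 4 → R) :
    (G j (fun l => u * p l) (fun l => v * q l) (fun l => w * r l) (fun l => z * s l)).det
      = u * v * w * z * (G j p q r s).det := by
  rw [G_det, G_det]; ring

theorem G_map {R S : Type*} [CommRing R] [CommRing S] (φ : R →+* S) (j : R)
    (p q r s : Fin 4 → R) :
    φ (G j p q r s).det =
      (G (φ j) (fun l => φ (p l)) (fun l => φ (q l)) (fun l => φ (r l)) (fun l => φ (s l))).det := by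
  rw [G_det, G_det]; simp

theorem G_zmod (y0 y1 y2 y3 : ZMod 5) :
    (G (3 : ZMod 5) ![y0,y1,y2,y3] ![y0,y1,y2,y3] ![y0,y1,y2,y3] ![y0,y1,y2,y3]).det = 0 →
      y0 = 0 ∧ y1 = 0 ∧ y2 = 0 ∧ y3 = 0 := by
  rw [G_det]
  simp only [Matrix.cons_val]
  revert y0 y1 y2 y3
  decide +kernel

theorem G_zmod' (y : Fin 4 → ZMod 5) (h : (G (3 : ZMod 5) y y y y).det = 0) (l : Fin 4) :
    y l = 0 := by
  have hy : y = ![y 0, y 1, y 2, y 3] := by ext i; fin_cases i <;> rfl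
  have := G_zmod (y 0) (y 1) (y 2) (y 3) (by rw [← hy]; exact h)
  obtain ⟨h0, h1, h2, h3⟩ := this
  fin_cases l <;> assumption

/-! ### the conjugates -/

theorem s1_cos : ∃ x : ℝ, s1 = (x : ℂ) ∧ x ^ 4 - x ^ 3 - 4 * x ^ 2 + 4 * x + 1 = 0 ∧ 0 < x := by
  refine ⟨2 * Real.cos (2 * Real.pi / 15), by simp [s1], ?_, ?_⟩
  · set c := Real.cos (2 * Real.pi / 15) with hc
    have hpos : 0 < c := Real.cos_pos_of_mem_Ioo ⟨by linarith [Real.pi_pos], by linarith [Real.pi_pos]⟩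
    have h5 : Real.cos (5 * (2 * Real.pi / 15)) = 16 * c ^ 5 - 20 * c ^ 3 + 5 * c := by
      have h3 := Real.cos_three_mul (2 * Real.pi / 15)
      have h2 := Real.cos_two_mul (2 * Real.pi / 15)
      have e5 : 5 * (2 * Real.pi / 15) = 3 * (2 * Real.pi / 15) + 2 * (2 * Real.pi / 15) := by ring
      have s3' := Real.sin_three_mul (2 * Real.pi / 15)
      have s2' := Real.sin_two_mul (2 * Real.pi / 15)
      have hs := Real.sin_sq_add_cos_sq (2 * Real.pi / 15)
      rw [e5, Real.cos_add, h3, h2, s3', s2']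
      rw [← hc] at *
      set s := Real.sin (2 * Real.pi / 15)
      have hs2 : s ^ 2 = 1 - c ^ 2 := by linarith
      have : (3 * s - 4 * s ^ 3) * (2 * s * c) = (3 * s ^ 2 - 4 * (s ^ 2) ^ 2) * (2 * c) := by ring
      rw [this, hs2]; ring
    have h23 : Real.cos (5 * (2 * Real.pi / 15)) = - (1 / 2) := by
      have : 5 * (2 * Real.pi / 15) = Real.pi - Real.pi / 3 := by ring
      rw [this, Real.cos_pi_sub, Real.cos_pi_div_three]
    have hne : 2 * c + 1 ≠ 0 := by positivity
    apply mul_left_cancel₀ hne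
    rw [h5] at h23
    linear_combination 2 * h23
  · have := Real.cos_pos_of_mem_Ioo (x := 2 * Real.pi / 15) ⟨by linarith [Real.pi_pos], by linarith [Real.pi_pos]⟩
    positivity

theorem f1 : s1 ^ 4 - s1 ^ 3 - 4 * s1 ^ 2 + 4 * s1 + 1 = 0 := by
  obtain ⟨x, h, hx, _⟩ := s1_cos
  rw [h]; exact_mod_cast hx

theorem fnext (x : ℂ) (h : x ^ 4 - x ^ 3 - 4 * x ^ 2 + 4 * x + 1 = 0) :
    (x^2-2) ^ 4 - (x^2-2) ^ 3 - 4 * (x^2-2) ^ 2 + 4 * (x^2-2) + 1 = 0 := by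
  linear_combination (x ^ 4 + x ^ 3 - 4 * x ^ 2 - 4 * x + 1) * h

theorem f2 : s2 ^ 4 - s2 ^ 3 - 4 * s2 ^ 2 + 4 * s2 + 1 = 0 := fnext _ f1
theorem f3 : s3 ^ 4 - s3 ^ 3 - 4 * s3 ^ 2 + 4 * s3 + 1 = 0 := fnext _ f2
theorem f4 : s4 ^ 4 - s4 ^ 3 - 4 * s4 ^ 2 + 4 * s4 + 1 = 0 := fnext _ f3

theorem s3_eq : s3 = s1 ^ 3 - 4 * s1 + 1 := by
  unfold s3 s2; linear_combination f1
theorem s4_eq : s4 = -s1 ^ 3 - s1 ^ 2 + 3 * s1 + 2 := by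
  rw [s4, s3_eq]; linear_combination (s1 ^ 2 + s1 - 3) * f1
theorem s5_eq : s4 ^ 2 - 2 = s1 := by
  rw [s4_eq]; linear_combination (s1 ^ 2 + 3 * s1 + 2) * f1

theorem ne_next (x : ℂ) (h : x ^ 4 - x ^ 3 - 4 * x ^ 2 + 4 * x + 1 = 0) : x ≠ x ^ 2 - 2 := by
  intro hx
  have h0 : (x - 2) * (x + 1) = 0 := by linear_combination -hx
  rcases mul_eq_zero.1 h0 with h1 | h1
  · have : x = 2 := by linear_combination h1
    subst this; norm_num at h
  · have : x = -1 := by linear_combination h1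
    subst this; norm_num at h

theorem ne_next2 (x : ℂ) (h : x ^ 4 - x ^ 3 - 4 * x ^ 2 + 4 * x + 1 = 0) :
    x ≠ (x ^ 2 - 2) ^ 2 - 2 := by
  intro hx
  have h3 : x ^ 3 - 5 * x + 1 = 0 := by linear_combination -h - hx
  have h2 : x ^ 2 - 2 * x + 2 = 0 := by linear_combination h - (x - 1) * h3
  have : x = -1 := by linear_combination (-1/3) * (h3 - (x + 2) * h2)
  subst this; norm_num at h

theorem n12 : s1 ≠ s2 := ne_next _ f1
theorem n23 : s2 ≠ s3 := ne_next _ f2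
theorem n34 : s3 ≠ s4 := ne_next _ f3
theorem n41 : s4 ≠ s1 := by
  have := ne_next _ f4
  rwa [s5_eq] at this
theorem n13 : s1 ≠ s3 := ne_next2 _ f1
theorem n24 : s2 ≠ s4 := ne_next2 _ f2

/-- Reduction modulo `2 + i`, sending `i` to `3`. -/
def φ5 : GaussianInt →+* ZMod 5 := Zsqrtd.lift ⟨3, by decide⟩

theorem φ5_apply (z : GaussianInt) : φ5 z = (z.re : ZMod 5) + (z.im : ZMod 5) * 3 := by
  simp [φ5]

def iG : GaussianInt := ⟨0, 1⟩
def π5 : GaussianInt := ⟨2, 1⟩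
def π5' : GaussianInt := ⟨2, -1⟩

theorem φ5_dvd (z : GaussianInt) (h : φ5 z = 0) : π5 ∣ z := by
  rw [φ5_apply] at h
  have h' : ((z.re + z.im * 3 : ℤ) : ZMod 5) = 0 := by push_cast; exact h
  rw [ZMod.intCast_zmod_eq_zero_iff_dvd] at h'
  obtain ⟨k, hk⟩ := h'
  refine ⟨⟨2 * k - z.im, -k + z.im⟩, ?_⟩
  push_cast at hk
  ext
  · simp [π5]; linarith
  · simp [π5]; ring

open Polynomial in
def fG : GaussianInt[X] := X ^ 4 - X ^ 3 - 4 * X ^ 2 + 4 * X + 1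

open Polynomial in
theorem fG_monic : fG.Monic := by unfold fG; monicity!

open Polynomial in
theorem fG_natDegree : fG.natDegree = 4 := by unfold fG; compute_degree!

open Polynomial in
theorem key (xs : Fin 4 → GaussianInt[X]) :
    ∃ g : GaussianInt,
      (G Complex.I (fun l => (xs l).eval₂ toComplex s1) (fun l => (xs l).eval₂ toComplex s2)
        (fun l => (xs l).eval₂ toComplex s3) (fun l => (xs l).eval₂ toComplex s4)).det
        = toComplex g ∧
      φ5 g = (G (3 : ZMod 5) (fun l => φ5 ((xs l).eval (-1))) (fun l => φ5 ((xs l).eval (-1)))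
        (fun l => φ5 ((xs l).eval (-1))) (fun l => φ5 ((xs l).eval (-1)))).det := by
  set Δ := (G Complex.I (fun l => (xs l).eval₂ toComplex s1) (fun l => (xs l).eval₂ toComplex s2)
        (fun l => (xs l).eval₂ toComplex s3) (fun l => (xs l).eval₂ toComplex s4)).det with hΔ
  let w : GaussianInt[X] := X ^ 2 - 2
  let D : GaussianInt[X] := (G (C iG) xs (fun l => (xs l).comp w)
    (fun l => ((xs l).comp w).comp w) (fun l => (((xs l).comp w).comp w).comp w)).det
  have hw : ∀ t : ℂ, w.eval₂ toComplex t = t ^ 2 - 2 := by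
    intro t; simp [w, eval₂_sub]
  have hi : toComplex iG = Complex.I := by simp [iG, toComplex_def]
  have hD : ∀ t : ℂ, D.eval₂ toComplex t =
      (G Complex.I (fun l => (xs l).eval₂ toComplex t)
        (fun l => (xs l).eval₂ toComplex (t ^ 2 - 2))
        (fun l => (xs l).eval₂ toComplex ((t ^ 2 - 2) ^ 2 - 2))
        (fun l => (xs l).eval₂ toComplex (((t ^ 2 - 2) ^ 2 - 2) ^ 2 - 2))).det := by
    intro t
    have := G_map (eval₂RingHom toComplex t) (C iG) xs (fun l => (xs l).comp w)
      (fun l => ((xs l).comp w).comp w) (fun l => (((xs l).comp w).comp w).comp w)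
    simp only [coe_eval₂RingHom, eval₂_C, eval₂_comp, hw, hi] at this
    exact this
  have e2 : s1 ^ 2 - 2 = s2 := rfl
  have e3 : s2 ^ 2 - 2 = s3 := rfl
  have e4 : s3 ^ 2 - 2 = s4 := rfl
  have d1 : D.eval₂ toComplex s1 = Δ := by rw [hD, e2, e3, e4]
  have d2 : D.eval₂ toComplex s2 = Δ := by rw [hD, e3, e4, s5_eq, G_cyc]
  have d3 : D.eval₂ toComplex s3 = Δ := by rw [hD, e4, s5_eq, e2, G_cyc, G_cyc]
  have d4 : D.eval₂ toComplex s4 = Δ := by rw [hD, s5_eq, e2, e3, G_cyc, G_cyc, G_cyc]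
  let p := D %ₘ fG
  have hp : p + fG * (D /ₘ fG) = D := modByMonic_add_div D fG
  have hpe : ∀ t : ℂ, t ^ 4 - t ^ 3 - 4 * t ^ 2 + 4 * t + 1 = 0 →
      p.eval₂ toComplex t = D.eval₂ toComplex t := by
    intro t ht
    have hf : fG.eval₂ toComplex t = 0 := by
      rw [← ht]; simp [fG, eval₂_sub, eval₂_add, eval₂_mul, eval₂_pow, eval₂_X, eval₂_one]
    conv_rhs => rw [← hp]
    rw [eval₂_add, eval₂_mul, hf]; simp
  have hpd : p.natDegree < 4 := by
    rw [← fG_natDegree]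
    apply natDegree_modByMonic_lt _ fG_monic
    intro h1
    have := fG_natDegree
    rw [h1] at this; simp at this
  have hP : p.map toComplex - C Δ = 0 := by
    apply eq_zero_of_natDegree_lt_card_of_eval_eq_zero' _ ({s1, s2, s3, s4} : Finset ℂ)
    · intro t ht
      simp only [Finset.mem_insert, Finset.mem_singleton] at ht
      rw [eval_sub, eval_C, eval_map, sub_eq_zero]
      rcases ht with rfl | rfl | rfl | rfl
      · rw [hpe _ f1, d1]
      · rw [hpe _ f2, d2]
      · rw [hpe _ f3, d3]
      · rw [hpe _ f4, d4]
    · have : ({s1, s2, s3, s4} : Finset ℂ).card = 4 := by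
        rw [Finset.card_insert_of_notMem, Finset.card_insert_of_notMem, Finset.card_pair n34]
        · simp [n23, n24]
        · simp [n12, n13, n41.symm]
      rw [this]
      refine lt_of_le_of_lt (natDegree_sub_le _ _) ?_
      simp only [natDegree_C, max_lt_iff]
      exact ⟨lt_of_le_of_lt natDegree_map_le hpd, by norm_num⟩
  have hpC : p = C (p.coeff 0) := by
    apply map_injective toComplex toComplex_injective
    have h1 : p.map toComplex = C Δ := sub_eq_zero.1 hP
    rw [map_C, ← coeff_map, h1]; simp
  refine ⟨p.coeff 0, ?_, ?_⟩
  · rw [← d1, ← hpe _ f1]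
    conv_lhs => rw [hpC]
    simp
  · have h1 : (p.eval (-1)) = p.coeff 0 := by
      conv_lhs => rw [hpC]
      simp
    have h2 : φ5 (fG.eval (-1)) = 0 := by
      simp only [fG, eval_add, eval_sub, eval_mul, eval_pow, eval_X, eval_one, eval_ofNat,
        map_add, map_sub, map_mul, map_pow, map_neg, map_one, map_ofNat]
      decide
    have h3 : φ5 (p.coeff 0) = φ5 (D.eval (-1)) := by
      rw [← h1]
      conv_rhs => rw [← hp]
      rw [eval_add, eval_mul, map_add, map_mul, h2]; simp
    rw [h3]
    have := G_map (φ5.comp (evalRingHom (-1))) (C iG) xs (fun l => (xs l).comp w)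
      (fun l => ((xs l).comp w).comp w) (fun l => (((xs l).comp w).comp w).comp w)
    have hw1 : w.eval (-1) = -1 := by simp [w]; norm_num
    have hi3 : φ5 iG = 3 := by rw [φ5_apply]; simp [iG]
    simp only [RingHom.comp_apply, coe_evalRingHom, eval_C, eval_comp, hw1, hi3] at this
    exact this

/-- Evaluation in the basis of powers of `t + 1`. -/
def Z (A B C D : Fin 4 → GaussianInt) (t : ℂ) (l : Fin 4) : ℂ :=
  toComplex (A l) + toComplex (B l) * (t + 1) + toComplex (C l) * (t + 1) ^ 2
    + toComplex (D l) * (t + 1) ^ 3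

/-- Determinant in the basis of powers of `t + 1`. -/
def dZ (A B C D : Fin 4 → GaussianInt) : ℂ :=
  (G Complex.I (Z A B C D s1) (Z A B C D s2) (Z A B C D s3) (Z A B C D s4)).det

open Polynomial in
theorem keyZ (A B C D : Fin 4 → GaussianInt) : ∃ g : GaussianInt, dZ A B C D = toComplex g ∧
    φ5 g = (G (3 : ZMod 5) (fun l => φ5 (A l)) (fun l => φ5 (A l))
        (fun l => φ5 (A l)) (fun l => φ5 (A l))).det := by
  have := key (fun l => Polynomial.C (A l) + Polynomial.C (B l) * (X + 1)
    + Polynomial.C (C l) * (X + 1) ^ 2 + Polynomial.C (D l) * (X + 1) ^ 3)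
  simp [eval₂_add, eval₂_mul, eval₂_pow] at this
  exact this

theorem step (A B C D : Fin 4 → GaussianInt) (h : dZ A B C D = 0) :
    ∃ A' : Fin 4 → GaussianInt, (∀ l, A l = π5 * A' l) ∧
      dZ (fun l => 5 * A' l + π5' * B l) (fun l => 5 * A' l + π5' * C l)
        (fun l => -5 * A' l + π5' * D l) A' = 0 := by
  obtain ⟨g, hg, hg'⟩ := keyZ A B C D
  have hg0 : g = 0 := toComplex_injective (by rw [← hg, h]; simp)
  rw [hg0, map_zero] at hg'
  have hA := fun l => φ5_dvd _ (G_zmod' _ hg'.symm l)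
  choose A' hA' using hA
  refine ⟨A', hA', ?_⟩
  set N := dZ (fun l => 5 * A' l + π5' * B l) (fun l => 5 * A' l + π5' * C l)
        (fun l => -5 * A' l + π5' * D l) A' with hN
  have h55 : toComplex π5' * toComplex π5 = 5 := by
    rw [← toComplex_mul]
    have : π5' * π5 = 5 := by ext <;> simp [π5, π5']
    rw [this]; exact map_ofNat toComplex 5
  have hz : ∀ t : ℂ, t ^ 4 - t ^ 3 - 4 * t ^ 2 + 4 * t + 1 = 0 →
      (fun l => toComplex π5' * Z A B C D t l) = fun l => (t + 1) *
      Z (fun l => 5 * A' l + π5' * B l) (fun l => 5 * A' l + π5' * C l)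
        (fun l => -5 * A' l + π5' * D l) A' t l := by
    intro t ht
    funext l
    simp only [Z, hA', map_add, map_mul, map_neg, map_ofNat]
    linear_combination toComplex (A' l) * h55 - toComplex (A' l) * ht
  have e1 := G_scale Complex.I (toComplex π5') (toComplex π5') (toComplex π5') (toComplex π5')
    (Z A B C D s1) (Z A B C D s2) (Z A B C D s3) (Z A B C D s4)
  rw [hz _ f1, hz _ f2, hz _ f3, hz _ f4, G_scale] at e1
  have e2 : (s1 + 1) * (s2 + 1) * (s3 + 1) * (s4 + 1) * N = 0 := by
    have h' : (G Complex.I (Z A B C D s1) (Z A B C D s2) (Z A B C D s3) (Z A B C D s4)).det = 0 := h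
    rw [h', mul_zero] at e1
    exact e1
  have ne : ∀ t : ℂ, t ^ 4 - t ^ 3 - 4 * t ^ 2 + 4 * t + 1 = 0 → t + 1 ≠ 0 := by
    intro t ht h0
    have : t = -1 := by linear_combination h0
    subst this; norm_num at ht
  simpa [ne _ f1, ne _ f2, ne _ f3, ne _ f4] using e2

theorem dvd_aux (a' b : GaussianInt) (k : GaussianInt) (hk : π5 ∣ k)
    (h : π5 ∣ k * a' + π5' * b) : π5 ∣ b := by
  have h1 : π5 ∣ π5' * b := (dvd_add_right (hk.mul_right a')).1 h
  obtain ⟨u, hu⟩ := h1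
  have hb : -π5' + (π5' - 1) * π5 = 1 := by ext <;> simp [π5, π5']
  refine ⟨-u + (π5' - 1) * b, ?_⟩
  linear_combination -hu - b * hb

theorem π5_dvd_five : π5 ∣ 5 := ⟨π5', by ext <;> simp [π5, π5']⟩

theorem step4 (A B C D : Fin 4 → GaussianInt) (h : dZ A B C D = 0) :
    ∃ A' B' C' D' : Fin 4 → GaussianInt, ((∀ l, A l = π5 * A' l) ∧ (∀ l, B l = π5 * B' l) ∧
      (∀ l, C l = π5 * C' l) ∧ (∀ l, D l = π5 * D' l)) ∧ dZ A' B' C' D' = 0 := by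
  obtain ⟨A', hA, h1⟩ := step A B C D h
  obtain ⟨A1, hA1, h2⟩ := step _ _ _ _ h1
  obtain ⟨A2, hA2, h3⟩ := step _ _ _ _ h2
  obtain ⟨A3, hA3, h4⟩ := step _ _ _ _ h3
  have d5 := π5_dvd_five
  have d5' : π5 ∣ -5 := (dvd_neg).2 d5
  have hB : ∀ l, π5 ∣ B l := fun l => dvd_aux _ _ _ d5 ⟨_, hA1 l⟩
  have hC : ∀ l, π5 ∣ C l := fun l => dvd_aux _ _ _ d5 (dvd_aux _ _ _ d5 ⟨_, hA2 l⟩)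
  have hD : ∀ l, π5 ∣ D l := fun l =>
    dvd_aux _ _ _ d5' (dvd_aux _ _ _ d5 (dvd_aux _ _ _ d5 ⟨_, hA3 l⟩))
  choose B' hB using hB
  choose C' hC using hC
  choose D' hD using hD
  refine ⟨A', B', C', D', ⟨hA, hB, hC, hD⟩, ?_⟩
  have hz : ∀ t : ℂ, Z A B C D t = fun l => toComplex π5 * Z A' B' C' D' t l := by
    intro t
    funext l
    simp only [Z, hA, hB, hC, hD, map_mul]
    ring
  rw [dZ, hz, hz, hz, hz, G_scale] at h
  have ne : toComplex π5 ≠ 0 := by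
    rw [Ne, toComplex_eq_zero]
    intro h0
    have := congrArg Zsqrtd.re h0
    simp [π5] at this
  simpa [ne, dZ] using h

theorem pow_dvd (n : ℕ) : ∀ (A B C D : Fin 4 → GaussianInt), dZ A B C D = 0 →
    ∀ l, π5 ^ n ∣ A l ∧ π5 ^ n ∣ B l ∧ π5 ^ n ∣ C l ∧ π5 ^ n ∣ D l := by
  induction n with
  | zero => intros; simp
  | succ n ih =>
    intro A B C D h l
    obtain ⟨A', B', C', D', ⟨hA, hB, hC, hD⟩, h'⟩ := step4 A B C D h
    obtain ⟨a1, a2, a3, a4⟩ := ih _ _ _ _ h' l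
    rw [hA, hB, hC, hD, pow_succ']
    exact ⟨mul_dvd_mul_left _ a1, mul_dvd_mul_left _ a2, mul_dvd_mul_left _ a3,
      mul_dvd_mul_left _ a4⟩

theorem eq_zero_of_pow (z : GaussianInt) (h : ∀ n, π5 ^ n ∣ z) : z = 0 := by
  by_contra hz
  have hu : ¬ IsUnit π5 := by
    intro hu
    have h0 : φ5 π5 = 0 := by
      rw [φ5_apply]
      simp only [π5]
      decide
    have : Fact (Nat.Prime 5) := ⟨by norm_num⟩
    exact (hu.map φ5).ne_zero h0
  obtain ⟨n, hn⟩ := FiniteMultiplicity.of_not_isUnit hu hz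
  exact hn (h _)

theorem M4_eq (a b c d : Fin 4 → GaussianInt) :
    (M4 a b c d).det = dZ (fun l => a l - b l + c l - d l) (fun l => b l - 2 * c l + 3 * d l)
      (fun l => c l - 3 * d l) d := by
  have hz : ∀ (t : ℂ) (l : Fin 4), Y a b c d l t =
      Z (fun l => a l - b l + c l - d l) (fun l => b l - 2 * c l + 3 * d l)
      (fun l => c l - 3 * d l) d t l := by
    intro t l
    simp only [Y, Z, map_add, map_sub, map_mul, map_ofNat]
    ring
  unfold M4 dZ G
  simp only [hz]

/-- Full diversity / non-vanishing determinant of the `4×4` perfect space-time code: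
if the Gaussian-integer coefficients `a_ℓ, b_ℓ, c_ℓ, d_ℓ` are not all zero, the
determinant of the codeword matrix is a nonzero Gaussian integer; in particular its
squared modulus is at least `1`. -/
theorem stmt17 (a b c d : Fin 4 → GaussianInt)
    (h : ¬ ∀ ℓ, a ℓ = 0 ∧ b ℓ = 0 ∧ c ℓ = 0 ∧ d ℓ = 0) :
    (∃ g : GaussianInt, Matrix.det (M4 a b c d) = toComplex g) ∧
    Matrix.det (M4 a b c d) ≠ 0 ∧
    1 ≤ Complex.normSq (Matrix.det (M4 a b c d)) := by
  have hne : (M4 a b c d).det ≠ 0 := by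
    intro h0
    rw [M4_eq] at h0
    apply h
    intro l
    have hp := fun n => pow_dvd n _ _ _ _ h0 l
    have hA := eq_zero_of_pow _ fun n => (hp n).1
    have hB := eq_zero_of_pow _ fun n => (hp n).2.1
    have hC := eq_zero_of_pow _ fun n => (hp n).2.2.1
    have hD := eq_zero_of_pow _ fun n => (hp n).2.2.2
    have hc : c l = 0 := by linear_combination hC + 3 * hD
    have hb : b l = 0 := by linear_combination hB + 2 * hc - 3 * hD
    exact ⟨by linear_combination hA + hb - hc + hD, hb, hc, hD⟩
  obtain ⟨g, hg, -⟩ := keyZ (fun l => a l - b l + c l - d l) (fun l => b l - 2 * c l + 3 * d l)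
      (fun l => c l - 3 * d l) d
  rw [← M4_eq] at hg
  refine ⟨⟨g, hg⟩, hne, ?_⟩
  have hg0 : g ≠ 0 := by
    rintro rfl
    exact hne (by rw [hg]; simp)
  have hpos : 0 < g.norm := GaussianInt.norm_pos.2 hg0
  rw [hg, ← GaussianInt.intCast_real_norm]
  exact_mod_cast hpos
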